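/- Let v be a word, w = a_1…a_k a word, and f ∈ NSym_A. Then 𝔹_v(f)·H_w = Σ_{0≤j≤k} 𝔹_{v·(a_{j+1}⋯a_k)}(f·H_{a_1⋯a_j}), where H_{a_1⋯a_0} is interpreted as 1. -/

import Mathlib

open scoped BigOperators

namespace ColoredImm

variable {A : Type*}

/-- A *weak sentence* over the alphabet `A`: a finite list of words (words may be empty). -/
abbrev Sentence (A : Type*) := List (List A)

/-- A genuine *sentence*: all of its words are nonempty. -/
def IsSentence (I : Sentence A) : Prop := ∀ w ∈ I, w ≠ []

/-- The size `|I|` of a sentence: its total number of letters. -/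
def size (I : Sentence A) : ℕ := (I.map List.length).sum

/-- The word lengths `wℓ(I)` of a sentence. -/
def wl (I : Sentence A) : List ℕ := I.map List.length

/-- The flattening of a weak sentence: delete all empty words. -/
def flattenWS (I : Sentence A) : Sentence A := I.filter (fun w => !w.isEmpty)

/-- `Refines J I` means `J ⪯ I`: the sentence `I` can be obtained by concatenating
some adjacent words of `J` (so `J` is a refinement of `I`, and `I` a coarsening of `J`). -/
def Refines (J I : Sentence A) : Prop :=
  ∃ P : List (Sentence A), (∀ p ∈ P, p ≠ []) ∧ P.flatten = J ∧ P.map List.flatten = I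

/-! ### Fillings and colored immaculate tableaux -/

/-- An integer filling of a diagram, recorded row by row. -/
abbrev Filling := List (List ℕ)

/-- The entry of a filling at box `b = (row, column)` (0-indexed), with default `0`. -/
def entryAt (f : Filling) (b : ℕ × ℕ) : ℕ := (f.getD b.1 []).getD b.2 0

/-- `IsCIT I f`: `f` is a colored immaculate tableau of shape `I`; that is, `f` has the
same shape as the colored composition diagram of `I`, its entries are positive integers
weakly increasing left to right along each row, and the entries in the first column are
strictly increasing from top to bottom. -/
def IsCIT (I : Sentence A) (f : Filling) : Prop :=
  f.map List.length = I.map List.length ∧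
  (∀ row ∈ f, row.Chain' (· ≤ ·)) ∧
  (f.filterMap List.head?).Chain' (· < ·) ∧
  (∀ x ∈ f.flatten, 1 ≤ x)

/-- The colors (letters of `w`) of the boxes of one row whose entry (in `row`) is `v`,
read from left to right. -/
def rowWith (w : List A) (row : List ℕ) (v : ℕ) : List A :=
  ((w.zip row).filter (fun p => p.2 == v)).map Prod.fst

/-- The word of the type of a tableau at value `v`: the colors of all boxes with entry `v`,
read left to right, from the bottom row up to the top row. -/
def typeWord (I : Sentence A) (f : Filling) (v : ℕ) : List A :=
  (((I.zip f).reverse).map (fun p => rowWith p.1 p.2 v)).flatten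

/-- `HasType I f B` : the tableau `f` (of shape `I`) has type the weak sentence `B`,
i.e. for every positive integer `v`, the colors of the boxes of `f` containing `v`
(read left to right, bottom to top) form the `v`-th word of `B`. -/
def HasType (I : Sentence A) (f : Filling) (B : Sentence A) : Prop :=
  ∀ v, 1 ≤ v → typeWord I f v = B.getD (v - 1) []

/-- `K_{J,B}`: the number of colored immaculate tableaux of shape `J` and type `B`. -/
noncomputable def KJB (J B : Sentence A) : ℕ :=
  Set.ncard {f : Filling | IsCIT J f ∧ HasType J f B}

/-! ### Standardization -/

/-- The list of boxes of a filling. -/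
def boxes (f : Filling) : List (ℕ × ℕ) :=
  ((List.range f.length).map
    (fun r => (List.range (f.getD r []).length).map (fun j => (r, j)))).flatten

/-- `beforeB f b b'`: box `b` comes strictly before box `b'` in the type-reading order of `f`
(smaller entries first; among equal entries, lower rows first, and within a row left to right). -/
def beforeB (f : Filling) (b b' : ℕ × ℕ) : Bool :=
  entryAt f b < entryAt f b' ||
    (entryAt f b == entryAt f b' && (b'.1 < b.1 || (b.1 == b'.1 && b.2 < b'.2)))

/-- The standardization of a filling: each box is renumbered (starting from `1`)
according to its position in the type-reading order. -/
def stdFill (f : Filling) : Filling :=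
  (List.range f.length).map (fun r =>
    (List.range (f.getD r []).length).map (fun j =>
      1 + ((boxes f).filter (fun b' => beforeB f b' (r, j))).length))

/-- The number of boxes of a filling. -/
def nBoxes (f : Filling) : ℕ := f.flatten.length

/-- A filling of `n` boxes is standard when its entries are exactly `1, …, n`,
each appearing once. -/
def IsStandardF (f : Filling) : Prop := f.flatten.Perm (List.range' 1 (nBoxes f))

/-! ### Descents and the colored descent composition -/

/-- The (0-indexed) row containing the value `v` in a standard filling. -/
def rowOf (f : Filling) (v : ℕ) : ℕ := f.findIdx (fun row => row.contains v)

/-- The sorted list of descents of a standard filling: those `i` with `1 ≤ i ≤ n-1`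
such that `i+1` lies in a strictly lower row than `i`. -/
def descList (f : Filling) : List ℕ :=
  (List.range' 1 (nBoxes f - 1)).filter (fun i => decide (rowOf f i < rowOf f (i + 1)))

/-- The composition of `n` associated to a set of split positions `d_1 < … < d_k`:
`(d_1, d_2 - d_1, …, n - d_k)`. -/
def compOf (ds : List ℕ) (n : ℕ) : List ℕ :=
  List.zipWith (fun a b => b - a) (0 :: ds) (ds ++ [n])

/-- Split a word into a sentence according to a composition. -/
def splitByComp : List A → List ℕ → List (List A)
  | _, [] => []
  | w, a :: rest => w.take a :: splitByComp (w.drop a) rest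

/-- The color of the box containing the value `v` in a standard filling of shape `I`. -/
def colorOf [Inhabited A] (I : Sentence A) (f : Filling) (v : ℕ) : A :=
  (I.getD (rowOf f v) []).getD ((f.getD (rowOf f v) []).findIdx (fun x => x == v)) default

/-- The maximal word of the colored descent composition of a standard filling of shape `I`:
the colors of its boxes read in the order of their integer entries. -/
def readWord [Inhabited A] (I : Sentence A) (f : Filling) : List A :=
  (List.range (nBoxes f)).map (fun i => colorOf I f (i + 1))

/-- The colored descent composition `co_A(U)` of a standard colored immaculate tableau:
read the colors of the boxes in the order of their entries, starting a new word
immediately after each descent. -/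
def coA [Inhabited A] (I : Sentence A) (f : Filling) : Sentence A :=
  if nBoxes f = 0 then [] else splitByComp (readWord I f) (compOf (descList f) (nBoxes f))

/-- `L_{J,C}`: the number of standard colored immaculate tableaux of shape `J`
with colored descent composition `C`. -/
noncomputable def LJC [Inhabited A] (J C : Sentence A) : ℕ :=
  Set.ncard {f : Filling | IsCIT J f ∧ IsStandardF f ∧ coA J f = C}

/-! ### The colored quasisymmetric functions `QSym_A` -/

/-- A (normal form of a) monomial in the partially commutative variables `x_{a,i}`:
a pair consisting of the list of words `(w_1, …, w_m)` and the list of (strictly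
increasing, positive) second indices `(j_1 < … < j_m)`, representing
`x_{w_1,j_1} ⋯ x_{w_m,j_m}`. -/
abbrev Mono (A : Type*) := List (List A) × List ℕ

/-- A colored quasisymmetric "series": a formal linear combination of monomials,
recorded by its coefficient function.  `QSym_A` itself is the span of the colored
monomial functions `MQ I` inside this space. -/
abbrev QSymA (A : Type*) := Mono A → ℚ

/-- Validity of a monomial normal form: words and indices match up, the indices are
strictly increasing positive integers, and all words are nonempty. -/
def ValidMono (m : Mono A) : Prop :=
  m.1.length = m.2.length ∧ m.2.Chain' (· < ·) ∧ (∀ j ∈ m.2, 1 ≤ j) ∧ ∀ w ∈ m.1, w ≠ []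

open Classical in
/-- The colored monomial quasisymmetric function `M_I`: the sum of all monomials
`x_{w_1,j_1} ⋯ x_{w_m,j_m}` with `j_1 < … < j_m`, where `I = (w_1, …, w_m)`. -/
noncomputable def MQ (I : Sentence A) : QSymA A := fun m =>
  if m.1 = I ∧ ValidMono m then 1 else 0

/-- The largest entry of a filling. -/
def maxEntry (f : Filling) : ℕ := f.flatten.foldr max 0

/-- The monomial `x_T` of a colored immaculate tableau `T = f` of shape `I`:
for `T` of type `B = (u_1, …, u_j)` it is `x_{u_1,1} x_{u_2,2} ⋯ x_{u_j,j}`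
(empty words are skipped). -/
def monoOf (I : Sentence A) (f : Filling) : Mono A :=
  let vs := ((List.range (maxEntry f)).map (· + 1)).filter (fun v => !(typeWord I f v).isEmpty)
  (vs.map (typeWord I f), vs)

/-- The colored dual immaculate function `𝔖*_J = Σ_T x_T`, the sum of the monomials of all
colored immaculate tableaux `T` of shape `J` (its coefficient at a monomial `m` is the
number of such tableaux with `x_T = m`). -/
noncomputable def dualImm (J : Sentence A) : QSymA A := fun m =>
  (Set.ncard {f : Filling | IsCIT J f ∧ monoOf J f = m} : ℚ)

/-- The colored fundamental quasisymmetric function `F_I = Σ_{J ⪯ I} M_J`. -/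
noncomputable def FQ (I : Sentence A) : QSymA A :=
  ∑ᶠ J ∈ {J : Sentence A | Refines J I}, MQ J

/-! ### The colored immaculate descent graph -/

/-- Edges of the colored immaculate descent graph: a directed edge from `I` to `J` (`J ≠ I`)
whenever some standard colored immaculate tableau of shape `I` has colored descent
composition `J`. -/
def IsEdge [Inhabited A] (I J : Sentence A) : Prop := J ≠ I ∧ LJC I J ≠ 0

/-- Directed paths from `I` to `K` in the colored immaculate descent graph, recorded by
their (nonempty) lists of successive vertices; the path `[I]` is the empty path at `I`. -/
def PathsFromTo [Inhabited A] (I K : Sentence A) : Set (List (Sentence A)) :=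
  {p | p.head? = some I ∧ p.getLast? = some K ∧ p.Chain' IsEdge}

/-- The signed weight `(-1)^{ℓ(𝒫)} prod(𝒫)` of a directed path `𝒫`:
`ℓ(𝒫)` is its number of edges and `prod(𝒫)` the product of its edge weights `L_{I,J}`. -/
noncomputable def pathWeight [Inhabited A] (p : List (Sentence A)) : ℚ :=
  ((-1 : ℚ)) ^ (p.length - 1) * ((p.zip p.tail).map (fun e => (LJC e.1 e.2 : ℚ))).prod

/-- `L⁻¹_{I,K} = Σ_𝒫 (-1)^{ℓ(𝒫)} prod(𝒫)`, summed over all directed paths `𝒫`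
from `I` to `K` in the colored immaculate descent graph. -/
noncomputable def Linv [Inhabited A] (I K : Sentence A) : ℚ :=
  ∑ᶠ p ∈ PathsFromTo I K, pathWeight p

/-! ### The colored noncommutative symmetric functions `NSym_A` -/

/-- A formal series over the complete homogeneous basis `{H_I}` of `NSym_A`, recorded by its
coefficient function on (weak) sentences.  `NSym_A` itself consists of the finitely
supported elements supported on genuine sentences; see `InNSym`. -/
abbrev NSymA (A : Type*) := Sentence A → ℚ

/-- Membership in `NSym_A` proper: finitely supported, and supported on genuine sentences. -/
def InNSym (f : NSymA A) : Prop :=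
  (Function.support f).Finite ∧ ∀ I, f I ≠ 0 → IsSentence I

open Classical in
/-- The colored complete homogeneous noncommutative symmetric function
`H_I = H_{w_1} ⋯ H_{w_k}`. -/
noncomputable def Hd (I : Sentence A) : NSymA A := fun J => if J = I then 1 else 0

/-- `H_w` for a single word `w`, with `H_∅ = 1`. -/
noncomputable def Hw (w : List A) : NSymA A := if w.isEmpty then Hd [] else Hd [w]

/-- Multiplication in `NSym_A` (the concatenation product, extended to series):
`H_I · H_J = H_{I ⬝ J}`. -/
def mulN (f g : NSymA A) : NSymA A := fun I =>
  ∑ j ∈ Finset.range (I.length + 1), f (I.take j) * g (I.drop j)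

/-- The duality pairing `⟨·,·⟩ : NSym_A × QSym_A → ℚ`, determined by
`⟨H_I, M_J⟩ = δ_{I,J}`: the `M_I`-coefficient of a quasisymmetric function is its
coefficient on the monomial `x_{w_1,1} x_{w_2,2} ⋯ x_{w_k,k}`. -/
noncomputable def pairNQ (G : NSymA A) (F : QSymA A) : ℚ :=
  ∑ᶠ I ∈ {I : Sentence A | IsSentence I}, G I * F (I, List.range' 1 I.length)

/-- All ways of splitting each word of a list of words into a prefix and a suffix. -/
def splitsOf : List (List A) → List (List (List A) × List (List A))
  | [] => [([], [])]
  | w :: ws =>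
      (((splitsOf ws).map (fun p =>
        (List.range (w.length + 1)).map (fun t => (w.take t :: p.1, w.drop t :: p.2))))).flatten

/-- Restriction of a candidate monomial: keep only the nonempty words together with
their indices. -/
def restrictMono (ws : List (List A)) (js : List ℕ) : Mono A :=
  let ps := (ws.zip js).filter (fun p => !p.1.isEmpty)
  (ps.map Prod.fst, ps.map Prod.snd)

/-- The product of colored quasisymmetric series: the coefficient of a monomial in `F·G`
is the sum, over all ways of writing each of its words as a concatenation of a word of a
monomial of `F` (on the left) and a word of a monomial of `G` (on the right), of the
products of the corresponding coefficients. -/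
def mulQ (F G : QSymA A) : QSymA A := fun m =>
  ((splitsOf m.1).map (fun p => F (restrictMono p.1 m.2) * G (restrictMono p.2 m.2))).sum

/-- The right perp operator `M^⊸` of `M ∈ QSym_A`, the linear operator on `NSym_A`
determined by `⟨M^⊸(H), G⟩ = ⟨H, G·M⟩`; explicitly, for the dual bases `{M_I}` and `{H_I}`,
`M^⊸(H) = Σ_I ⟨H, M_I · M⟩ H_I`. -/
noncomputable def rperp (M : QSymA A) (H : NSymA A) : NSymA A :=
  ∑ᶠ I ∈ {I : Sentence A | IsSentence I}, pairNQ H (mulQ (MQ I) M) • Hd I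

/-- The colored noncommutative Bernstein operator
`𝔹_v = Σ_u Σ_{Q : w(Q^r) = u} (-1)^{ℓ(Q)} H_{v·u} · (Σ_{S ⪰ Q} M_S^⊸)`,
where `Q` runs over all sentences, `u = w(Q^r)` is the concatenation of the words of `Q`
in reverse order, and `S` runs over all coarsenings of `Q`. -/
noncomputable def Bern (v : List A) (f : NSymA A) : NSymA A :=
  ∑ᶠ Q ∈ {Q : Sentence A | IsSentence Q},
    ((-1 : ℚ)) ^ Q.length •
      mulN (Hw (v ++ Q.reverse.flatten))
        (∑ᶠ S ∈ {S : Sentence A | Refines Q S}, rperp (MQ S) f)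

/-- The colored immaculate function `𝔖_J = 𝔹_{v_1} 𝔹_{v_2} ⋯ 𝔹_{v_h}(1)`. -/
noncomputable def ImmS (J : Sentence A) : NSymA A := J.foldr Bern (Hd [])

/-- The colored ribbon function `R_I = Σ_{J ⪰ I} (-1)^{ℓ(J) - ℓ(I)} H_J`. -/
noncomputable def Rib (I : Sentence A) : NSymA A :=
  ∑ᶠ J ∈ {J : Sentence A | Refines I J}, ((-1 : ℚ)) ^ (I.length - J.length) • Hd J

/-- The Pieri relation `J ⊂_w K` for a sentence `J = (v_1, …, v_h)` and a word `w`: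
`K = (u_1, …, u_g)` with `h ≤ g ≤ h+1` (setting `v_{h+1} = ∅`) and `u_j = v_j · q_j`
for words `q_j` (possibly empty) whose reversed concatenation `q_g ⋯ q_1` equals `w`. -/
def PieriRel (J : Sentence A) (w : List A) (K : Sentence A) : Prop :=
  J.length ≤ K.length ∧ K.length ≤ J.length + 1 ∧
  ∃ q : List (List A), q.length = K.length ∧ q.reverse.flatten = w ∧
    ∀ j < K.length, K.getD j [] = J.getD j [] ++ q.getD j []

/-- Right containment of a weak sentence `K` in `J`: same length, and each word of `K` is a
suffix of the corresponding word of `J`. -/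
def RightContained (K J : Sentence A) : Prop :=
  K.length = J.length ∧ ∀ i < J.length, (K.getD i []).IsSuffix (J.getD i [])

/-- The weak sentence `J/_R K`: remove each word of `K` from the right end of the
corresponding word of `J`. -/
def rightQuot (J K : Sentence A) : Sentence A :=
  List.zipWith (fun v u => v.take (v.length - u.length)) J K

/-- Left containment `J ⊆_L I`: `ℓ(J) ≤ ℓ(I)` and each word of `J` is a prefix of the
corresponding word of `I`. -/
def LeftContained (J I : Sentence A) : Prop :=
  J.length ≤ I.length ∧ ∀ i < J.length, (J.getD i []).IsPrefix (I.getD i [])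

/-- A skew colored immaculate tableau of shape `I/J`: a filling of the active boxes
(the `i`-th row keeps the last `|w_i| - |v_i|` boxes) with positive integers, rows weakly
increasing left to right, and the entries in the (active part of the) first column of `I`
strictly increasing top to bottom. -/
def IsSkewCIT (I J : Sentence A) (f : Filling) : Prop :=
  f.map List.length =
    (List.range I.length).map (fun i => (I.getD i []).length - (J.getD i []).length) ∧
  (∀ row ∈ f, row.Chain' (· ≤ ·)) ∧
  ((List.range I.length).filterMap
    (fun i => if (J.getD i []).length = 0 then (f.getD i []).head? else none)).Chain' (· < ·) ∧
  (∀ x ∈ f.flatten, 1 ≤ x)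

/-- The word of the type of a skew tableau at value `v`: the colors of the active boxes with
entry `v`, read left to right, bottom to top. -/
def skewTypeWord (I J : Sentence A) (f : Filling) (v : ℕ) : List A :=
  (((List.range I.length).reverse).map (fun i =>
    rowWith ((I.getD i []).drop (J.getD i []).length) (f.getD i []) v)).flatten

/-- `SkewHasType I J f K` : the skew tableau `f` of shape `I/J` has type `K`. -/
def SkewHasType (I J : Sentence A) (f : Filling) (K : Sentence A) : Prop :=
  ∀ v, 1 ≤ v → skewTypeWord I J f v = K.getD (v - 1) []

/-! ### The complement involution `ψ` and the row-strict functions -/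

/-- The complement `I^c` of a sentence: the unique sentence with the same maximal word
that splits exactly where `I` does not. -/
def complSent (I : Sentence A) : Sentence A :=
  let w := I.flatten
  let n := w.length
  if n = 0 then []
  else
    let splits := (((wl I).scanl (· + ·) 0).drop 1).dropLast
    let csplits := (List.range' 1 (n - 1)).filter (fun i => !(splits.contains i))
    splitByComp w (compOf csplits n)

/-- The `M_I`-coefficient of a colored quasisymmetric function. -/
noncomputable def coeffM (G : QSymA A) (I : Sentence A) : ℚ := G (I, List.range' 1 I.length)

/-- The image of `M_I` under `ψ`, via `M_I = Σ_{J ⪯ I} (-1)^{ℓ(J)-ℓ(I)} F_J` and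
`ψ(F_J) = F_{J^c}`. -/
noncomputable def psiM (I : Sentence A) : QSymA A :=
  ∑ᶠ J ∈ {J : Sentence A | Refines J I}, ((-1 : ℚ)) ^ (J.length - I.length) • FQ (complSent J)

/-- The linear involution `ψ` of `QSym_A`, determined by `ψ(F_I) = F_{I^c}`. -/
noncomputable def psiQ (G : QSymA A) : QSymA A :=
  ∑ᶠ I ∈ {I : Sentence A | IsSentence I}, coeffM G I • psiM I

/-- A colored row-strict immaculate tableau of shape `I`: entries strictly increase left to
right along each row and weakly increase top to bottom down the first column. -/
def IsCRSIT (I : Sentence A) (f : Filling) : Prop :=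
  f.map List.length = I.map List.length ∧
  (∀ row ∈ f, row.Chain' (· < ·)) ∧
  (f.filterMap List.head?).Chain' (· ≤ ·) ∧
  (∀ x ∈ f.flatten, 1 ≤ x)

/-- The word of the type of a row-strict tableau at value `v`: the colors of the boxes with
entry `v`, read left to right, top to bottom. -/
def rsTypeWord (I : Sentence A) (f : Filling) (v : ℕ) : List A :=
  ((I.zip f).map (fun p => rowWith p.1 p.2 v)).flatten

/-- The monomial `x_T` of a colored row-strict immaculate tableau. -/
def rsMonoOf (I : Sentence A) (f : Filling) : Mono A :=
  let vs := ((List.range (maxEntry f)).map (· + 1)).filter (fun v => !(rsTypeWord I f v).isEmpty)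
  (vs.map (rsTypeWord I f), vs)

/-- The colored row-strict dual immaculate function `ℛ𝔖*_J = Σ_T x_T`, summed over all
colored row-strict immaculate tableaux `T` of shape `J`. -/
noncomputable def rsDualImm (J : Sentence A) : QSymA A := fun m =>
  (Set.ncard {f : Filling | IsCRSIT J f ∧ rsMonoOf J f = m} : ℚ)

/-- `α ⪰ β` in the reverse lexicographic order on compositions: at the first index where
they differ, `α` has the *smaller* entry (padding with zeros). -/
def RevLexGE (α β : List ℕ) : Prop :=
  α = β ∨ ∃ i, (∀ j < i, α.getD j 0 = β.getD j 0) ∧ α.getD i 0 < β.getD i 0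

/-! ### Uncolored (ordinary) versions, for `QSym` -/

namespace Uncolored

/-- A composition: a list of positive integers. -/
def IsComposition (α : List ℕ) : Prop := ∀ a ∈ α, 1 ≤ a

/-- `β ⪯ α`: the composition `α` is obtained by summing adjacent parts of `β`. -/
def RefinesC (β α : List ℕ) : Prop :=
  ∃ P : List (List ℕ), (∀ p ∈ P, p ≠ []) ∧ P.flatten = β ∧ P.map List.sum = α

/-- A monomial `x_{i_1}^{a_1} ⋯ x_{i_m}^{a_m}` recorded by its exponents and its
strictly increasing positive indices. -/
abbrev MonoU := List ℕ × List ℕ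

/-- A quasisymmetric "series", recorded by its coefficient function on monomials.
`QSym` is the span of the monomial functions `MU α` inside this space. -/
abbrev QSymU := MonoU → ℚ

/-- Validity of a monomial: matching lengths, strictly increasing positive indices,
positive exponents. -/
def ValidMonoU (m : MonoU) : Prop :=
  m.1.length = m.2.length ∧ m.2.Chain' (· < ·) ∧ (∀ j ∈ m.2, 1 ≤ j) ∧ ∀ a ∈ m.1, 1 ≤ a

open Classical in
/-- The monomial quasisymmetric function `M_α`. -/
noncomputable def MU (α : List ℕ) : QSymU := fun m =>
  if m.1 = α ∧ ValidMonoU m then 1 else 0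

/-- The fundamental quasisymmetric function `F_α = Σ_{β ⪯ α} M_β`. -/
noncomputable def FU (α : List ℕ) : QSymU :=
  ∑ᶠ β ∈ {β : List ℕ | RefinesC β α}, MU β

/-- An immaculate tableau of shape `α`: positive integer entries, rows weakly increasing
left to right, first column strictly increasing top to bottom. -/
def IsIT (α : List ℕ) (f : Filling) : Prop :=
  f.map List.length = α ∧
  (∀ row ∈ f, row.Chain' (· ≤ ·)) ∧
  (f.filterMap List.head?).Chain' (· < ·) ∧
  (∀ x ∈ f.flatten, 1 ≤ x)

/-- The number of boxes of `f` with entry `v`. -/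
def countOf (f : Filling) (v : ℕ) : ℕ := (f.flatten.filter (fun x => x == v)).length

/-- The monomial `x^T` of an immaculate tableau `T` of type `β`:
`x_1^{β_1} ⋯ x_h^{β_h}` (zero exponents skipped). -/
def monoOfU (f : Filling) : MonoU :=
  let vs := ((List.range (maxEntry f)).map (· + 1)).filter (fun v => decide (countOf f v ≠ 0))
  (vs.map (countOf f), vs)

/-- The dual immaculate function `𝔖*_α = Σ_T x^T`, summed over all immaculate tableaux
of shape `α`. -/
noncomputable def dualImmU (α : List ℕ) : QSymU := fun m =>
  (Set.ncard {f : Filling | IsIT α f ∧ monoOfU f = m} : ℚ)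

/-- The descent composition `co(U)` of a standard immaculate tableau. -/
def descComp (f : Filling) : List ℕ :=
  if nBoxes f = 0 then [] else compOf (descList f) (nBoxes f)

/-- `L_{α,β}`: the number of standard immaculate tableaux of shape `α` with descent
composition `β`. -/
noncomputable def LU (α β : List ℕ) : ℕ :=
  Set.ncard {f : Filling | IsIT α f ∧ IsStandardF f ∧ descComp f = β}

/-- Edges of the immaculate descent graph `𝔇^n`. -/
def IsEdgeU (α β : List ℕ) : Prop := β ≠ α ∧ LU α β ≠ 0

/-- Directed paths from `α` to `β` in the immaculate descent graph, recorded by their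
lists of successive vertices; `[α]` is the empty path at `α`. -/
def PathsU (α β : List ℕ) : Set (List (List ℕ)) :=
  {p | p.head? = some α ∧ p.getLast? = some β ∧ p.Chain' IsEdgeU}

/-- The signed weight `(-1)^{ℓ(𝒫)} prod(𝒫)` of a path. -/
noncomputable def pathWeightU (p : List (List ℕ)) : ℚ :=
  ((-1 : ℚ)) ^ (p.length - 1) * ((p.zip p.tail).map (fun e => (LU e.1 e.2 : ℚ))).prod

/-- `L⁻¹_{α,β} = Σ_𝒫 (-1)^{ℓ(𝒫)} prod(𝒫)`, over directed paths from `α` to `β` in `𝔇^n`. -/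
noncomputable def LinvU (α β : List ℕ) : ℚ :=
  ∑ᶠ p ∈ PathsU α β, pathWeightU p

end Uncolored

end ColoredImm

namespace ColoredImm

/-! ### HELPERS: finite-support sums -/

/-- `h` has finite support and its sum is `m`. -/
def HasFS {ι M : Type*} [AddCommMonoid M] (h : ι → M) (m : M) : Prop :=
  (Function.support h).Finite ∧ ∑ᶠ i, h i = m

theorem HasFS.zero {ι M : Type*} [AddCommMonoid M] : HasFS (fun _ : ι => (0 : M)) 0 := by
  refine ⟨?_, finsum_zero⟩
  simp [Function.support]

theorem HasFS.add {ι M : Type*} [AddCommMonoid M] {h k : ι → M} {m n : M}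
    (hh : HasFS h m) (hk : HasFS k n) : HasFS (fun i => h i + k i) (m + n) := by
  refine ⟨(hh.1.union hk.1).subset (Function.support_add h k), ?_⟩
  rw [finsum_add_distrib hh.1 hk.1, hh.2, hk.2]

theorem HasFS.smul {ι M : Type*} [AddCommMonoid M] [Module ℚ M] {h : ι → M} {m : M}
    (c : ℚ) (hh : HasFS h m) : HasFS (fun i => c • h i) (c • m) := by
  refine ⟨hh.1.subset (Function.support_const_smul_subset c h), ?_⟩
  rw [← smul_finsum' c hh.1, hh.2]

theorem HasFS.fsum {ι M κ : Type*} [AddCommMonoid M] (s : Finset κ) {h : κ → ι → M} {m : κ → M}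
    (hh : ∀ k ∈ s, HasFS (h k) (m k)) :
    HasFS (fun i => ∑ k ∈ s, h k i) (∑ k ∈ s, m k) := by
  classical
  induction s using Finset.induction_on with
  | empty => simpa using HasFS.zero
  | insert a s ha ih =>
    simp only [Finset.sum_insert ha]
    exact (hh a (by simp)).add (ih fun k hk => hh k (by simp [hk]))

theorem HasFS.lsum {ι M κ : Type*} [AddCommMonoid M] (L : List κ) {h : κ → ι → M} {m : κ → M}
    (hh : ∀ k ∈ L, HasFS (h k) (m k)) :
    HasFS (fun i => (L.map fun k => h k i).sum) (L.map m).sum := by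
  induction L with
  | nil => simpa using HasFS.zero
  | cons a s ih =>
    simp only [List.map_cons, List.sum_cons]
    exact (hh a (by simp)).add (ih fun k hk => hh k (by simp [hk]))

open Classical in
theorem HasFS.single {ι M : Type*} [AddCommMonoid M] (a : ι) (F : ι → M) :
    HasFS (fun i => if i = a then F i else 0) (F a) := by
  refine ⟨(Set.finite_singleton a).subset ?_, ?_⟩
  · intro i hi
    by_contra h
    apply hi
    have : i ≠ a := h
    simp [this]
  · rw [finsum_eq_single _ a]
    · simp
    · intro x hx
      simp [hx]

open Classical in
theorem HasFS.ofFinite {ι M : Type*} [AddCommMonoid M] {s : Set ι} (hs : s.Finite) (F : ι → M) :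
    HasFS (fun i => if i ∈ s then F i else 0) (∑ i ∈ hs.toFinset, F i) := by
  refine ⟨hs.subset ?_, ?_⟩
  · intro i hi
    by_contra h
    apply hi
    simp [h]
  · rw [← finsum_mem_eq_finite_toFinset_sum, finsum_mem_def]
    rfl

open Classical in
theorem HasFS.mem_eq {ι M : Type*} [AddCommMonoid M] {s : Set ι} {F : ι → M} {m : M}
    (h : HasFS (fun i => if i ∈ s then F i else 0) m) : ∑ᶠ i ∈ s, F i = m := by
  rw [finsum_mem_def, ← h.2]
  rfl

/-! ### multiplication -/

theorem mulN_add_left (f g h : NSymA A) : mulN (f + g) h = mulN f h + mulN g h := by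
  funext I
  simp [mulN, add_mul, Finset.sum_add_distrib]

theorem mulN_add_right (f g h : NSymA A) : mulN f (g + h) = mulN f g + mulN f h := by
  funext I
  simp [mulN, mul_add, Finset.sum_add_distrib]

theorem mulN_smul_left (c : ℚ) (f g : NSymA A) : mulN (c • f) g = c • mulN f g := by
  funext I
  simp [mulN, Finset.mul_sum, mul_assoc]

theorem mulN_smul_right (c : ℚ) (f g : NSymA A) : mulN f (c • g) = c • mulN f g := by
  funext I
  simp only [mulN, Finset.mul_sum, Pi.smul_apply, smul_eq_mul]
  exact Finset.sum_congr rfl fun _ _ => by ring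

/-- `mulN` as a bilinear map. -/
noncomputable def mulL : NSymA A →ₗ[ℚ] NSymA A →ₗ[ℚ] NSymA A :=
  LinearMap.mk₂ ℚ mulN mulN_add_left mulN_smul_left mulN_add_right mulN_smul_right

theorem mulL_apply (f g : NSymA A) : mulL f g = mulN f g := rfl

theorem mulL_Hd (I J : Sentence A) : mulL (Hd I) (Hd J) = Hd (I ++ J) := by
  funext K
  simp only [mulL_apply, mulN, Hd]
  by_cases h : K = I ++ J
  · subst h
    rw [if_pos rfl, Finset.sum_eq_single I.length]
    · simp
    · intro j hj hne
      have : (I ++ J).take j ≠ I := by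
        intro h
        have := congrArg List.length h
        simp at this hj
        omega
      simp [this]
    · intro h
      simp at h
  · rw [if_neg h]
    apply Finset.sum_eq_zero
    intro j hj
    by_cases h1 : K.take j = I
    · by_cases h2 : K.drop j = J
      · exact absurd (by rw [← h1, ← h2, List.take_append_drop]) h
      · simp [h2]
    · simp [h1]

/-- The sentence of a possibly empty word. -/
def ee (x : List A) : Sentence A := flattenWS [x]

theorem ee_nil : ee ([] : List A) = [] := rfl

theorem ee_ne {x : List A} (h : x ≠ []) : ee x = [x] := by
  simp [ee, flattenWS, h]

theorem Hw_eq (x : List A) : Hw x = Hd (ee x) := by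
  by_cases h : x = []
  · subst h; simp [Hw, ee_nil]
  · simp [Hw, ee_ne h, h]

/-! ### splits -/

theorem splits_len (K : Sentence A) : ∀ p ∈ splitsOf K,
    p.1.length = K.length ∧ p.2.length = K.length := by
  induction K with
  | nil => simp [splitsOf]
  | cons w ws ih =>
    intro p hp
    simp only [splitsOf, List.mem_flatten, List.mem_map] at hp
    obtain ⟨l, ⟨q, hq, rfl⟩, hp⟩ := hp
    simp only [List.mem_map] at hp
    obtain ⟨t, _, rfl⟩ := hp
    simp [ih q hq]

theorem sum_list_range {M : Type*} [AddCommMonoid M] (F : ℕ → M) (n : ℕ) :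
    ((List.range n).map F).sum = ∑ t ∈ Finset.range n, F t := by
  induction n with
  | zero => simp
  | succ n ih => rw [List.range_succ, Finset.sum_range_succ]; simp [ih]

theorem sum_splits_cons {M : Type*} [AddCommMonoid M] (w : List A) (ws : Sentence A)
    (F : Sentence A × Sentence A → M) :
    ((splitsOf (w :: ws)).map F).sum =
      ((splitsOf ws).map fun p => ∑ t ∈ Finset.range (w.length + 1),
        F (w.take t :: p.1, w.drop t :: p.2)).sum := by
  simp only [splitsOf, List.map_flatten, List.sum_flatten, List.map_map]
  congr 1
  apply List.map_congr_left
  intro p _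
  simp only [Function.comp_apply, List.map_map]
  exact sum_list_range _ _

theorem sum_splits_snoc {M : Type*} [AddCommMonoid M] (K : Sentence A) (x : List A)
    (F : Sentence A × Sentence A → M) :
    ((splitsOf (K ++ [x])).map F).sum =
      ((splitsOf K).map fun p => ∑ t ∈ Finset.range (x.length + 1),
        F (p.1 ++ [x.take t], p.2 ++ [x.drop t])).sum := by
  induction K generalizing F with
  | nil =>
    rw [List.nil_append, sum_splits_cons]
    simp [splitsOf]
  | cons w ws ih =>
    rw [List.cons_append, sum_splits_cons, ih, sum_splits_cons]
    congr 1
    apply List.map_congr_left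
    intro p _
    rw [Finset.sum_comm]
    rfl

theorem restrict_fst (ws : Sentence A) (js : List ℕ) (h : ws.length = js.length) :
    (restrictMono ws js).1 = flattenWS ws := by
  simp only [restrictMono, flattenWS]
  induction ws generalizing js with
  | nil => simp
  | cons w ws ih =>
    cases js with
    | nil => simp at h
    | cons j js =>
      have := ih js (by simpa using h)
      by_cases hw : w = [] <;> simp_all

theorem snd_zip_sublist {α β : Type*} (l : List α) (m : List β) :
    ((l.zip m).map Prod.snd).Sublist m := by
  induction l generalizing m with
  | nil => simp
  | cons a l ih =>
    cases m with
    | nil => simp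
    | cons b m => simpa using ih m

theorem valid_restrict (ws : Sentence A) (n : ℕ) :
    ValidMono (restrictMono ws (List.range' 1 n)) := by
  have hs : (restrictMono ws (List.range' 1 n)).2.Sublist (List.range' 1 n) := by
    simp only [restrictMono]
    refine (List.Sublist.map _ List.filter_sublist).trans ?_
    exact snd_zip_sublist _ _
  refine ⟨by simp [restrictMono], ?_, ?_, ?_⟩
  · exact (List.Pairwise.sublist hs List.pairwise_lt_range').isChain
  · intro j hj
    have := hs.subset hj
    simp at this
    exact this.1
  · intro w hw
    simp only [restrictMono, List.mem_map, List.mem_filter] at hw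
    obtain ⟨p, ⟨_, hp⟩, rfl⟩ := hw
    simpa using hp

open Classical in
theorem MQ_restrict (I ws : Sentence A) (n : ℕ) (h : ws.length = n) :
    MQ I (restrictMono ws (List.range' 1 n)) = if flattenWS ws = I then 1 else 0 := by
  simp only [MQ, valid_restrict, and_true]
  rw [restrict_fst _ _ (by simpa using h)]

theorem isSentence_flattenWS (K : Sentence A) : IsSentence (flattenWS K) := by
  intro w hw
  simpa [flattenWS] using (List.mem_filter.1 hw).2

/-! ### refinements -/

theorem refs_finite (T : Sentence A) : {Q : Sentence A | IsSentence Q ∧ Refines Q T}.Finite := by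
  have : (Set.range fun c : Composition T.flatten.length =>
    T.flatten.splitWrtComposition c).Finite := Set.finite_range _
  refine this.subset ?_
  rintro Q ⟨hQ, P, _, rfl, rfl⟩
  have e : (P.map List.flatten).flatten = P.flatten.flatten := by
    exact List.flatten_flatten.symm
  rw [e]
  refine ⟨⟨P.flatten.map List.length, ?_, ?_⟩, ?_⟩
  · intro i hi
    obtain ⟨w, hw, rfl⟩ := List.mem_map.1 hi
    exact List.length_pos_iff.2 (hQ w hw)
  · simp [List.length_flatten]
  · exact List.splitWrtComposition_flatten _ _ rfl

theorem isSentence_append {P Q : Sentence A} :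
    IsSentence (P ++ Q) ↔ IsSentence P ∧ IsSentence Q := by
  simp only [IsSentence, List.mem_append]
  constructor
  · intro h
    exact ⟨fun w hw => h w (Or.inl hw), fun w hw => h w (Or.inr hw)⟩
  · rintro ⟨h1, h2⟩ w (hw | hw)
    · exact h1 w hw
    · exact h2 w hw

theorem refs_snoc (T : Sentence A) (y : List A) (hy : y ≠ []) (Q : Sentence A) :
    (IsSentence Q ∧ Refines Q (T ++ [y])) ↔
      ∃ j < y.length, ∃ Q', Q = Q' ++ [y.drop j] ∧ IsSentence Q' ∧
        Refines Q' (T ++ ee (y.take j)) := by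
  constructor
  · rintro ⟨hQ, P, hP, rfl, h⟩
    rcases List.eq_nil_or_concat P with rfl | ⟨P0, p, rfl⟩
    · simp at h
    simp only [List.concat_eq_append, List.map_append, List.map_cons, List.map_nil] at h
    obtain ⟨h1, h2⟩ := List.append_inj' h rfl
    simp only [List.cons.injEq, and_true] at h2
    subst h1
    rcases List.eq_nil_or_concat p with rfl | ⟨p', z, rfl⟩
    · exact absurd rfl (hP [] (by simp))
    simp only [List.concat_eq_append] at *
    simp only [List.flatten_append, List.flatten_singleton] at h2 hQ ⊢
    rw [isSentence_append, isSentence_append] at hQ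
    have hz : z ≠ [] := hQ.2.2 z (by simp)
    have hzl := List.length_pos_iff.2 hz
    subst h2
    refine ⟨p'.flatten.length, by simp; omega, P0.flatten ++ p', by simp,
      isSentence_append.2 ⟨hQ.1, hQ.2.1⟩, ?_⟩
    rw [List.take_left' rfl]
    by_cases hp' : p' = []
    · subst hp'
      exact ⟨P0, fun p hp => hP p (by simp [hp]), by simp, by simp [ee_nil]⟩
    · have : p'.flatten ≠ [] := by
        obtain ⟨a, l, rfl⟩ := List.exists_cons_of_ne_nil hp'
        have := hQ.2.1 a (by simp)
        simp [this]
      rw [ee_ne this]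
      refine ⟨P0 ++ [p'], ?_, by simp, by simp⟩
      intro p hp
      rcases List.mem_append.1 hp with hp | hp
      · exact hP p (by simp [hp])
      · simp at hp; subst hp; exact hp'
  · rintro ⟨j, hj, Q', rfl, hQ', P, hP, rfl, h⟩
    have hd : y.drop j ≠ [] := by
      intro h
      have := congrArg List.length h
      simp at this; omega
    refine ⟨isSentence_append.2 ⟨hQ', by simpa [IsSentence] using hd⟩, ?_⟩
    by_cases h0 : j = 0
    · subst h0
      simp only [List.take_zero, ee_nil, List.append_nil] at h
      refine ⟨P ++ [[y]], ?_, by simp, by simp [h]⟩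
      intro p hp
      rcases List.mem_append.1 hp with hp | hp
      · exact hP p hp
      · simp at hp; subst hp; simp
    · rw [ee_ne (by simp [h0, hy])] at h
      rcases List.eq_nil_or_concat P with rfl | ⟨P0, p, rfl⟩
      · simp at h
      simp only [List.concat_eq_append, List.map_append, List.map_cons, List.map_nil] at h
      obtain ⟨h1, h2⟩ := List.append_inj' h rfl
      simp only [List.cons.injEq, and_true] at h2
      subst h1
      refine ⟨P0 ++ [p ++ [y.drop j]], ?_, by simp, by simp [h2]⟩
      intro q hq
      rcases List.mem_append.1 hq with hq | hq
      · exact hP q (by simp [hq])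
      · simp at hq; subst hq; simp

/-- Signed sum over the refinements of `T`. -/
noncomputable def gg (v : List A) (T : Sentence A) : NSymA A :=
  ∑ Q ∈ (refs_finite T).toFinset, ((-1 : ℚ)) ^ Q.length • Hw (v ++ Q.reverse.flatten)

theorem sum_refs_snoc {M : Type*} [AddCommMonoid M] (T : Sentence A) (y : List A) (hy : y ≠ [])
    (F : Sentence A → M) :
    ∑ Q ∈ (refs_finite (T ++ [y])).toFinset, F Q =
      ∑ j ∈ Finset.range y.length,
        ∑ Q ∈ (refs_finite (T ++ ee (y.take j))).toFinset, F (Q ++ [y.drop j]) := by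
  rw [Finset.sum_sigma']
  symm
  refine Finset.sum_bij (fun x _ => x.2 ++ [y.drop x.1]) ?_ ?_ ?_ ?_
  · rintro ⟨j, Q⟩ h
    simp only [Finset.mem_sigma, Finset.mem_range, Set.Finite.mem_toFinset, Set.mem_ofPred_eq] at h ⊢
    rw [refs_snoc T y hy]
    exact ⟨j, h.1, Q, rfl, h.2⟩
  · rintro ⟨j, Q⟩ h ⟨j', Q'⟩ h' he
    simp only [Finset.mem_sigma, Finset.mem_range] at h h' he
    obtain ⟨h1, h2⟩ := List.append_inj' he rfl
    have := congrArg List.length (List.cons.inj h2).1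
    simp at this
    have : j = j' := by omega
    subst this; subst h1; rfl
  · intro Q hQ
    simp only [Set.Finite.mem_toFinset, Set.mem_ofPred_eq] at hQ
    rw [refs_snoc T y hy] at hQ
    obtain ⟨j, hj, Q', rfl, h⟩ := hQ
    refine ⟨⟨j, Q'⟩, ?_, rfl⟩
    simp only [Finset.mem_sigma, Finset.mem_range, Set.Finite.mem_toFinset, Set.mem_ofPred_eq]
    exact ⟨hj, h⟩
  · intros; rfl

theorem gg_cancel (v : List A) (T : Sentence A) (y : List A) (hy : y ≠ []) :
    ∑ j ∈ Finset.range (y.length + 1), gg (v ++ y.drop j) (T ++ ee (y.take j)) = 0 := by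
  rw [Finset.sum_range_succ]
  have : gg (v ++ y.drop y.length) (T ++ ee (y.take y.length)) =
      - ∑ j ∈ Finset.range y.length, gg (v ++ y.drop j) (T ++ ee (y.take j)) := by
    rw [List.take_length, List.drop_length, ee_ne hy, List.append_nil, gg, sum_refs_snoc T y hy,
      ← Finset.sum_neg_distrib]
    refine Finset.sum_congr rfl fun j _ => ?_
    rw [gg, ← Finset.sum_neg_distrib]
    refine Finset.sum_congr rfl fun Q _ => ?_
    simp [pow_succ]
  rw [this, add_neg_cancel]

/-! ### the Bernstein operator on a basis element -/

/-- `𝔹_v(H_K)`. -/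
noncomputable def BK (v : List A) (K : Sentence A) : NSymA A :=
  ((splitsOf K).map fun p => mulL (gg v (flattenWS p.2)) (Hd (flattenWS p.1))).sum

open Classical in
theorem pairNQ_rep {κ : Type*} (s : Finset κ) (c : κ → ℚ) (φ : κ → Sentence A)
    (hφ : ∀ k ∈ s, IsSentence (φ k)) (F : QSymA A) :
    pairNQ (∑ k ∈ s, c k • Hd (φ k)) F =
      ∑ k ∈ s, c k * F (φ k, List.range' 1 (φ k).length) := by
  apply HasFS.mem_eq
  have := HasFS.fsum s (fun k _ => (HasFS.single (φ k)
    (fun I => F (I, List.range' 1 I.length))).smul (c k))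
  simp only [smul_eq_mul] at this
  convert this using 2 with I
  simp only [Finset.sum_apply, Pi.smul_apply, smul_eq_mul, Hd, Finset.sum_mul, Set.mem_ofPred_eq]
  by_cases hI : IsSentence I
  · rw [if_pos hI]
    refine Finset.sum_congr rfl fun k _ => ?_
    by_cases h : I = φ k <;> simp [h]
  · rw [if_neg hI]
    refine (Finset.sum_eq_zero fun k hk => ?_).symm
    have : I ≠ φ k := fun h => hI (h ▸ hφ k hk)
    simp [this]

open Classical in
theorem mulQ_MQ (I S K : Sentence A) :
    mulQ (MQ I) (MQ S) (K, List.range' 1 K.length) =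
      ((splitsOf K).map fun p =>
        if I = flattenWS p.1 then (if S = flattenWS p.2 then (1 : ℚ) else 0) else 0).sum := by
  simp only [mulQ]
  congr 1
  apply List.map_congr_left
  intro p hp
  have := splits_len K p hp
  rw [MQ_restrict _ _ _ this.1, MQ_restrict _ _ _ this.2]
  simp only [eq_comm (a := I), eq_comm (a := S)]
  split_ifs <;> simp

theorem list_sum_smul {κ M : Type*} [AddCommMonoid M] [Module ℚ M] (L : List κ) (F : κ → ℚ)
    (m : M) : (L.map F).sum • m = (L.map fun k => F k • m).sum := by
  induction L with
  | nil => simp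
  | cons a L ih => simp [add_smul, ih]

open Classical in
theorem rperp_rep {κ : Type*} (s : Finset κ) (c : κ → ℚ) (φ : κ → Sentence A)
    (hφ : ∀ k ∈ s, IsSentence (φ k)) (S : Sentence A) :
    rperp (MQ S) (∑ k ∈ s, c k • Hd (φ k)) =
      ∑ k ∈ s, c k • ((splitsOf (φ k)).map fun p =>
        if S = flattenWS p.2 then Hd (flattenWS p.1) else 0).sum := by
  apply HasFS.mem_eq
  have := HasFS.fsum s (fun k _ => (HasFS.lsum (splitsOf (φ k)) (fun p _ =>
    HasFS.single (flattenWS p.1)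
      (fun I : Sentence A => if S = flattenWS p.2 then Hd I else 0))).smul (c k))
  convert this using 2 with I
  simp only [Set.mem_ofPred_eq]
  rw [pairNQ_rep s c φ hφ]
  simp only [mulQ_MQ]
  rw [Finset.sum_smul]
  by_cases hI : IsSentence I
  · rw [if_pos hI]
    refine Finset.sum_congr rfl fun k _ => ?_
    rw [mul_smul, list_sum_smul]
    congr 3
    funext p
    split_ifs <;> simp
  · rw [if_neg hI]
    refine (Finset.sum_eq_zero fun k hk => ?_).symm
    have : ∀ p : Sentence A × Sentence A, I ≠ flattenWS p.1 :=
      fun p h => hI (h ▸ isSentence_flattenWS _)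
    simp [this]

open Classical in
theorem D_rep {κ : Type*} (s : Finset κ) (c : κ → ℚ) (φ : κ → Sentence A)
    (hφ : ∀ k ∈ s, IsSentence (φ k)) (Q : Sentence A) :
    ∑ᶠ S ∈ {S : Sentence A | Refines Q S}, rperp (MQ S) (∑ k ∈ s, c k • Hd (φ k)) =
      ∑ k ∈ s, c k • ((splitsOf (φ k)).map fun p =>
        if Refines Q (flattenWS p.2) then Hd (flattenWS p.1) else 0).sum := by
  apply HasFS.mem_eq
  have := HasFS.fsum s (fun k _ => (HasFS.lsum (splitsOf (φ k)) (fun p _ =>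
    HasFS.single (flattenWS p.2)
      (fun S : Sentence A => if Refines Q S then Hd (flattenWS p.1) else 0))).smul (c k))
  convert this using 2 with S
  simp only [Set.mem_ofPred_eq]
  rw [rperp_rep s c φ hφ]
  by_cases hS : Refines Q S
  · simp only [if_pos hS]
  · simp [if_neg hS]

open Classical in
theorem Bern_rep {κ : Type*} (v : List A) (s : Finset κ) (c : κ → ℚ) (φ : κ → Sentence A)
    (hφ : ∀ k ∈ s, IsSentence (φ k)) :
    Bern v (∑ k ∈ s, c k • Hd (φ k)) = ∑ k ∈ s, c k • BK v (φ k) := by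
  apply HasFS.mem_eq
  have := HasFS.fsum s (fun k _ => (HasFS.lsum (splitsOf (φ k)) (fun p _ =>
    HasFS.ofFinite (refs_finite (flattenWS p.2))
      (fun Q : Sentence A => mulL (((-1 : ℚ)) ^ Q.length • Hw (v ++ Q.reverse.flatten))
        (Hd (flattenWS p.1))))).smul (c k))
  convert this using 2 with Q
  · rw [D_rep s c φ hφ]
    simp only [Set.mem_ofPred_eq]
    by_cases hQ : IsSentence Q
    · simp only [if_pos hQ, hQ, true_and]
      rw [← mulL_apply, map_sum, Finset.smul_sum]
      refine Finset.sum_congr rfl fun k _ => ?_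
      rw [map_smul, smul_comm, map_list_sum, List.map_map, List.smul_sum, List.map_map]
      congr 3
      funext p
      simp only [Function.comp]
      split_ifs <;> simp
    · simp [hQ]
  · rw [BK]
    congr 3
    funext p
    rw [gg, map_sum, LinearMap.sum_apply]

theorem flattenWS_append (I J : Sentence A) : flattenWS (I ++ J) = flattenWS I ++ flattenWS J := by
  simp [flattenWS]

theorem BK_snoc (v : List A) (K : Sentence A) (x : List A) :
    BK v (K ++ ee x) = ((splitsOf K).map fun p => ∑ t ∈ Finset.range (x.length + 1),
      mulL (gg v (flattenWS p.2 ++ ee (x.drop t))) (Hd (flattenWS p.1 ++ ee (x.take t)))).sum := by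
  by_cases hx : x = []
  · subst hx
    simp [ee_nil, BK]
  · rw [ee_ne hx, BK, sum_splits_snoc]
    simp only [flattenWS_append]
    rfl

theorem key (v w : List A) (T I : Sentence A) :
    ∑ j ∈ Finset.range (w.length + 1), ∑ t ∈ Finset.range ((w.take j).length + 1),
      mulL (gg (v ++ w.drop j) (T ++ ee ((w.take j).drop t))) (Hd (I ++ ee ((w.take j).take t))) =
    mulL (gg v T) (Hd (I ++ ee w)) := by
  have h1 : ∀ j ∈ Finset.range (w.length + 1), ∑ t ∈ Finset.range ((w.take j).length + 1),
      mulL (gg (v ++ w.drop j) (T ++ ee ((w.take j).drop t))) (Hd (I ++ ee ((w.take j).take t))) =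
      ∑ t ∈ Finset.range (j + 1),
      mulL (gg (v ++ w.drop j) (T ++ ee ((w.take j).drop t))) (Hd (I ++ ee (w.take t))) := by
    intro j hj
    have hj' : (w.take j).length = j := by simp at hj ⊢; omega
    rw [hj']
    refine Finset.sum_congr rfl fun t ht => ?_
    rw [List.take_take, min_eq_left (by simp at ht; omega)]
  rw [Finset.sum_congr rfl h1]
  rw [Finset.sum_comm' (t' := Finset.range (w.length + 1))
    (s' := fun t => Finset.Ico t (w.length + 1)) (by intro j t; simp; omega)]
  rw [Finset.sum_range_succ]
  rw [Finset.sum_eq_zero]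
  · simp [ee_nil]
  · intro t ht
    have ht' : t < w.length := by simpa using ht
    rw [← LinearMap.sum_apply, ← map_sum, Finset.sum_Ico_eq_sum_range]
    have := gg_cancel v T (w.drop t) (by simp; omega)
    rw [List.length_drop] at this
    rw [show w.length + 1 - t = w.length - t + 1 by omega]
    simp only [List.drop_drop, List.take_drop] at this
    rw [this]
    simp

/-- For words `v` and `w = a_1…a_k` and `f ∈ NSym_A`,
`𝔹_v(f)·H_w = Σ_{0 ≤ j ≤ k} 𝔹_{v·(a_{j+1}⋯a_k)}(f·H_{a_1⋯a_j})`. -/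
theorem statement11 {A : Type*} (v w : List A) (f : NSymA A) (hf : InNSym f) :
    mulN (Bern v f) (Hw w) =
      ∑ j ∈ Finset.range (w.length + 1),
        Bern (v ++ w.drop j) (mulN f (Hw (w.take j))) := by
  classical
  obtain ⟨hfin, hs⟩ := hf
  have hrep : f = ∑ K ∈ hfin.toFinset, f K • Hd K := by
    funext J
    simp only [Finset.sum_apply, Pi.smul_apply, smul_eq_mul, Hd, mul_ite, mul_one, mul_zero]
    rw [Finset.sum_ite_eq]
    simp only [Set.Finite.mem_toFinset, Function.mem_support]
    split_ifs with h
    · rfl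
    · simpa using h
  have hK : ∀ K ∈ hfin.toFinset, IsSentence K := fun K hK => hs K (by simpa using hK)
  have hB : ∀ u, Bern u f = ∑ K ∈ hfin.toFinset, f K • BK u K := by
    intro u
    conv_lhs => rw [hrep]
    exact Bern_rep u _ f id hK
  have hB2 : ∀ u x, Bern u (mulN f (Hw x)) = ∑ K ∈ hfin.toFinset, f K • BK u (K ++ ee x) := by
    intro u x
    have : mulN f (Hw x) = ∑ K ∈ hfin.toFinset, f K • Hd (K ++ ee x) := by
      conv_lhs => rw [hrep]
      rw [← mulL_apply, map_sum, LinearMap.sum_apply]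
      refine Finset.sum_congr rfl fun K _ => ?_
      rw [map_smul, LinearMap.smul_apply, Hw_eq, mulL_Hd]
    rw [this]
    exact Bern_rep u _ f (fun K => K ++ ee x)
      (fun K h => isSentence_append.2 ⟨hK K h, isSentence_flattenWS _⟩)
  have assoc : ∀ u T I, mulL (mulL (gg u T) (Hd I)) (Hw w) = mulL (gg u T) (Hd (I ++ ee w)) := by
    intro u T I
    simp only [gg, map_sum, LinearMap.sum_apply, map_smul, LinearMap.smul_apply, Hw_eq, mulL_Hd,
      List.append_assoc]
  simp only [hB2]
  rw [hB, Finset.sum_comm, ← mulL_apply, map_sum, LinearMap.sum_apply]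
  refine Finset.sum_congr rfl fun K _ => ?_
  rw [map_smul, LinearMap.smul_apply, ← Finset.smul_sum]
  congr 1
  simp only [BK_snoc]
  have hl : ∀ (L : List (Sentence A × Sentence A)) (F : ℕ → Sentence A × Sentence A → NSymA A)
      (s : Finset ℕ), ∑ j ∈ s, (L.map (F j)).sum = (L.map fun p => ∑ j ∈ s, F j p).sum := by
    intro L F s
    induction L with
    | nil => simp
    | cons a L ih => simp [Finset.sum_add_distrib, ih]
  rw [hl]
  simp only [key]
  rw [BK, ← LinearMap.flip_apply, map_list_sum, List.map_map]
  congr 2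
  funext p
  simp only [Function.comp, LinearMap.flip_apply]
  exact assoc _ _ _

end ColoredImm
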